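/- arXiv:2506.07189 — 3 statements merged into one kernel-verified Lean document; each statement's English description precedes it below -/
import Mathlib

section
/- Let f, g : ℝⁿ → ℝⁿ, let Φ : ℝⁿ → ℝⁿ be differentiable and satisfy the solution-preserving identity DΦ(x)·f(x) = g(Φ(x)) for all x, and let A : ℝ → Matrix (Fin n) (Fin n) ℝ be differentiable with A(t) invertible for every t. Define Γ(t,x) := A(t)·Φ(A(t)⁻¹·x). If z : ℝ → ℝⁿ is differentiable and satisfies z'(t) = f*(t, z(t)) for all t, where f* is the gauge transform of f by A, then the curve y(t) := Γ(t, z(t)) satisfies y'(t) = g*(t, y(t)) for all t, where g* is the gauge transform of g by A. -/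
open Matrix

theorem gauge_mulVec_hasDerivAt {n : ℕ} (A : ℝ → Matrix (Fin n) (Fin n) ℝ)
    (B : Matrix (Fin n) (Fin n) ℝ) (v : ℝ → Fin n → ℝ) (w : Fin n → ℝ) (t : ℝ)
    (hA : ∀ i j, HasDerivAt (fun s => A s i j) (B i j) t) (hv : HasDerivAt v w t) :
    HasDerivAt (fun s => (A s).mulVec (v s)) (B.mulVec (v t) + (A t).mulVec w) t := by
  rw [hasDerivAt_pi] at hv ⊢
  intro i
  have h := HasDerivAt.fun_sum (u := Finset.univ) (fun j _ => (hA i j).mul (hv j))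
  simpa [Matrix.mulVec, dotProduct, Finset.sum_add_distrib] using h

theorem gauge_det_differentiableAt {n : ℕ} (A : ℝ → Matrix (Fin n) (Fin n) ℝ) (t : ℝ)
    (hA : ∀ i j, DifferentiableAt ℝ (fun s => A s i j) t) :
    DifferentiableAt ℝ (fun s => (A s).det) t := by
  simp only [Matrix.det_apply']
  refine DifferentiableAt.fun_sum fun σ _ => ?_
  refine DifferentiableAt.const_mul ?_ _
  exact DifferentiableAt.fun_finsetProd fun i _ => hA _ _

theorem gauge_inv_differentiableAt {n : ℕ} (A : ℝ → Matrix (Fin n) (Fin n) ℝ) (t : ℝ)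
    (hA : ∀ i j, DifferentiableAt ℝ (fun s => A s i j) t) (hu : IsUnit (A t)) (i j : Fin n) :
    DifferentiableAt ℝ (fun s => (A s)⁻¹ i j) t := by
  have hd : (A t).det ≠ 0 := ((Matrix.isUnit_iff_isUnit_det _).1 hu).ne_zero
  simp only [Matrix.inv_def, Matrix.smul_apply, Ring.inverse_eq_inv', smul_eq_mul,
    Matrix.adjugate_apply]
  refine ((gauge_det_differentiableAt A t hA).inv hd).mul ?_
  refine gauge_det_differentiableAt _ t fun k l => ?_
  simp only [Matrix.updateRow_apply]
  split_ifs
  · exact differentiableAt_const _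
  · exact hA k l

/-- **Solution-preserving maps and gauge transforms.**
If the differentiable map `Φ` sends solutions of `ẋ = f(x)` to solutions of `ẋ = g(x)`
(i.e. `DΦ(x)·f(x) = g(Φ(x))` for all `x`), and `z` solves the gauge transform `f*` of `f` by
`A(t)`, then `y(t) := Γ(t, z(t)) := A(t)·Φ(A(t)⁻¹·z(t))` solves the gauge transform `g*`
of `g` by `A(t)`. -/
theorem gauge_transform_solution_preserving {n : ℕ}
    (f g : (Fin n → ℝ) → (Fin n → ℝ))
    (Φ : (Fin n → ℝ) → (Fin n → ℝ))
    (Φ' : (Fin n → ℝ) → ((Fin n → ℝ) →L[ℝ] (Fin n → ℝ)))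
    (hΦ : ∀ x, HasFDerivAt Φ (Φ' x) x)
    (hsp : ∀ x, Φ' x (f x) = g (Φ x))
    (A A' : ℝ → Matrix (Fin n) (Fin n) ℝ)
    (hA : ∀ t, ∀ i j, HasDerivAt (fun s => A s i j) (A' t i j) t)
    (hAinv : ∀ t, IsUnit (A t))
    (z : ℝ → Fin n → ℝ)
    (hz : ∀ t, HasDerivAt z
      ((A' t).mulVec ((A t)⁻¹.mulVec (z t)) +
        (A t).mulVec (f ((A t)⁻¹.mulVec (z t)))) t) :
    ∀ t, HasDerivAt (fun s => (A s).mulVec (Φ ((A s)⁻¹.mulVec (z s))))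
      ((A' t).mulVec ((A t)⁻¹.mulVec ((A t).mulVec (Φ ((A t)⁻¹.mulVec (z t))))) +
        (A t).mulVec (g ((A t)⁻¹.mulVec ((A t).mulVec (Φ ((A t)⁻¹.mulVec (z t))))))) t := by
  intro t
  have hinv : ∀ (s : ℝ) (v : Fin n → ℝ), (A s)⁻¹.mulVec ((A s).mulVec v) = v := fun s v => by
    rw [Matrix.mulVec_mulVec,
      Matrix.nonsing_inv_mul _ ((Matrix.isUnit_iff_isUnit_det _).1 (hAinv s)), Matrix.one_mulVec]
  have hinv2 : ∀ (s : ℝ) (v : Fin n → ℝ), (A s).mulVec ((A s)⁻¹.mulVec v) = v := fun s v => by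
    rw [Matrix.mulVec_mulVec,
      Matrix.mul_nonsing_inv _ ((Matrix.isUnit_iff_isUnit_det _).1 (hAinv s)), Matrix.one_mulVec]
  obtain ⟨w, hw⟩ : ∃ w, HasDerivAt (fun s => (A s)⁻¹.mulVec (z s)) w t :=
    ⟨_, gauge_mulVec_hasDerivAt (fun s => (A s)⁻¹)
      (Matrix.of fun i j => deriv (fun s => (A s)⁻¹ i j) t) z _ t
      (fun i j => (gauge_inv_differentiableAt A t
        (fun i j => (hA t i j).differentiableAt) (hAinv t) i j).hasDerivAt) (hz t)⟩
  have h1 := gauge_mulVec_hasDerivAt A (A' t) _ w t (hA t) hw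
  simp only [hinv2] at h1
  have h2 := add_left_cancel (h1.unique (hz t))
  have h3 : w = f ((A t)⁻¹.mulVec (z t)) := by
    rw [← hinv t w, h2, hinv]
  have h4 := (hΦ _).comp_hasDerivAt t hw
  rw [h3, hsp] at h4
  have h5 := gauge_mulVec_hasDerivAt A (A' t) _ _ t (hA t) h4
  simpa only [hinv, Function.comp_apply] using h5
end

section
/- Let f : ℝⁿ → ℝⁿ, let Φ : ℝⁿ → ℝⁿ be differentiable and satisfy DΦ(x)·f(x) = f(Φ(x)) for all x (i.e., Φ is a symmetry of ẋ = f(x)), and let A : ℝ → Matrix (Fin n) (Fin n) ℝ be differentiable with A(t) invertible for every t. Then Γ(t,x) := A(t)·Φ(A(t)⁻¹·x) is a symmetry of the gauge transform: for every differentiable z : ℝ → ℝⁿ with z'(t) = f*(t, z(t)) for all t, the curve y(t) := Γ(t, z(t)) also satisfies y'(t) = f*(t, y(t)) for all t. -/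
open Matrix

theorem gts_det {n : ℕ} (M : ℝ → Matrix (Fin n) (Fin n) ℝ) (t : ℝ)
    (h : ∀ i j, DifferentiableAt ℝ (fun s => M s i j) t) :
    DifferentiableAt ℝ (fun s => (M s).det) t := by
  simp only [Matrix.det_apply']
  refine DifferentiableAt.fun_sum fun σ _ => ?_
  refine DifferentiableAt.const_mul ?_ _
  exact DifferentiableAt.fun_finsetProd fun i _ => h _ _

theorem gts_inv {n : ℕ} (M : ℝ → Matrix (Fin n) (Fin n) ℝ) (t : ℝ)
    (h : ∀ i j, DifferentiableAt ℝ (fun s => M s i j) t) (hu : IsUnit (M t)) (i j : Fin n) :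
    DifferentiableAt ℝ (fun s => (M s)⁻¹ i j) t := by
  have hd : (M t).det ≠ 0 := ((Matrix.isUnit_iff_isUnit_det _).1 hu).ne_zero
  simp only [Matrix.inv_def, Matrix.smul_apply, smul_eq_mul, Ring.inverse_eq_inv']
  refine ((gts_det M t h).fun_inv hd).fun_mul ?_
  simp only [Matrix.adjugate_apply]
  refine gts_det _ t fun a b => ?_
  simp only [Matrix.updateRow_apply]
  split_ifs
  · exact differentiableAt_const _
  · exact h a b

theorem gts_mulVec {n : ℕ} (M : ℝ → Matrix (Fin n) (Fin n) ℝ) (M' : Matrix (Fin n) (Fin n) ℝ)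
    (v : ℝ → Fin n → ℝ) (v' : Fin n → ℝ) (t : ℝ)
    (h : ∀ i j, HasDerivAt (fun s => M s i j) (M' i j) t) (hv : HasDerivAt v v' t) :
    HasDerivAt (fun s => (M s).mulVec (v s)) (M'.mulVec (v t) + (M t).mulVec v') t := by
  rw [hasDerivAt_pi] at hv ⊢
  intro i
  simp only [Matrix.mulVec, dotProduct, Pi.add_apply, ← Finset.sum_add_distrib]
  exact HasDerivAt.fun_sum fun j _ => (h i j).fun_mul (hv j)

/-- **Symmetries transfer to gauge transforms.**
If the differentiable map `Φ` is a symmetry of `ẋ = f(x)` (i.e. `DΦ(x)·f(x) = f(Φ(x))` for all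
`x`), then `Γ(t,x) := A(t)·Φ(A(t)⁻¹·x)` is a symmetry of the gauge transform `f*` of `f` by
`A(t)`: whenever `z` solves `ż = f*(t,z)`, so does `y(t) := Γ(t, z(t))`. -/
theorem gauge_transform_symmetry {n : ℕ}
    (f : (Fin n → ℝ) → (Fin n → ℝ))
    (Φ : (Fin n → ℝ) → (Fin n → ℝ))
    (Φ' : (Fin n → ℝ) → ((Fin n → ℝ) →L[ℝ] (Fin n → ℝ)))
    (hΦ : ∀ x, HasFDerivAt Φ (Φ' x) x)
    (hsym : ∀ x, Φ' x (f x) = f (Φ x))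
    (A A' : ℝ → Matrix (Fin n) (Fin n) ℝ)
    (hA : ∀ t, ∀ i j, HasDerivAt (fun s => A s i j) (A' t i j) t)
    (hAinv : ∀ t, IsUnit (A t))
    (z : ℝ → Fin n → ℝ)
    (hz : ∀ t, HasDerivAt z
      ((A' t).mulVec ((A t)⁻¹.mulVec (z t)) +
        (A t).mulVec (f ((A t)⁻¹.mulVec (z t)))) t) :
    ∀ t, HasDerivAt (fun s => (A s).mulVec (Φ ((A s)⁻¹.mulVec (z s))))
      ((A' t).mulVec ((A t)⁻¹.mulVec ((A t).mulVec (Φ ((A t)⁻¹.mulVec (z t))))) +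
        (A t).mulVec (f ((A t)⁻¹.mulVec ((A t).mulVec (Φ ((A t)⁻¹.mulVec (z t))))))) t := by
  intro t
  have hd : ∀ s, IsUnit (A s).det := fun s => (Matrix.isUnit_iff_isUnit_det _).1 (hAinv s)
  have c1 : ∀ s v, (A s)⁻¹.mulVec ((A s).mulVec v) = v := fun s v => by
    rw [Matrix.mulVec_mulVec, Matrix.nonsing_inv_mul _ (hd s), Matrix.one_mulVec]
  have c2 : ∀ s v, (A s).mulVec ((A s)⁻¹.mulVec v) = v := fun s v => by
    rw [Matrix.mulVec_mulVec, Matrix.mul_nonsing_inv _ (hd s), Matrix.one_mulVec]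
  have hB : ∀ i j, DifferentiableAt ℝ (fun s => (A s)⁻¹ i j) t :=
    gts_inv A t (fun i j => (hA t i j).differentiableAt) (hAinv t)
  obtain ⟨w', hw⟩ : ∃ w', HasDerivAt (fun s => (A s)⁻¹.mulVec (z s)) w' t :=
    ⟨_, gts_mulVec _ (Matrix.of fun i j => deriv (fun s => (A s)⁻¹ i j) t) z _ t
      (fun i j => (hB i j).hasDerivAt) (hz t)⟩
  have hz2 := gts_mulVec A (A' t) _ _ t (hA t) hw
  simp only [c2] at hz2
  have e := add_left_cancel (hz2.unique (hz t))
  have e2 : w' = f ((A t)⁻¹.mulVec (z t)) := by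
    rw [← c1 t w', e, c1]
  subst e2
  have h3 := gts_mulVec A (A' t) _ _ t (hA t) ((hΦ _).comp_hasDerivAt t hw)
  simp only [c1]
  rw [hsym] at h3
  exact h3
end

section
/- Let h, f : ℝⁿ → ℝⁿ be differentiable and let A : ℝ → Matrix (Fin n) (Fin n) ℝ be differentiable with A(t) invertible for every t. Define ĥ(t,x) := A(t)·h(A(t)⁻¹·x) and f*(t,x) := A'(t)·A(t)⁻¹·x + A(t)·f(A(t)⁻¹·x). Then for all t and x, the Lie bracket with respect to x (t being a parameter) satisfies [ĥ, f*]_x(t,x) := D_x f*(t,x)·ĥ(t,x) − D_x ĥ(t,x)·f*(t,x) = D_t ĥ(t,x) + A(t)·[h,f](A(t)⁻¹·x), where [h,f](x) := Df(x)·h(x) − Dh(x)·f(x). In particular, if [h,f] = 0 identically, then [ĥ, f*]_x(t,x) = D_t ĥ(t,x) for all t, x. -/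
open Matrix

/-- Product rule for matrix-vector multiplication, with entrywise derivatives. -/
theorem hasDerivAt_mulVec_aux {n : ℕ} (A : ℝ → Matrix (Fin n) (Fin n) ℝ)
    (A' : Matrix (Fin n) (Fin n) ℝ) (t : ℝ)
    (hA : ∀ i j, HasDerivAt (fun s => A s i j) (A' i j) t)
    (v : ℝ → Fin n → ℝ) (v' : Fin n → ℝ) (hv : HasDerivAt v v' t) :
    HasDerivAt (fun s => (A s).mulVec (v s)) (A'.mulVec (v t) + (A t).mulVec v') t := by
  rw [hasDerivAt_pi]
  intro i
  have hv' := hasDerivAt_pi.1 hv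
  have := HasDerivAt.fun_sum (u := Finset.univ) (fun j _ => (hA i j).mul (hv' j))
  simpa [Matrix.mulVec, dotProduct, Finset.sum_add_distrib] using this

/-- Derivative of `s ↦ A(s)⁻¹ x`. -/
theorem hasDerivAt_inv_mulVec_aux {n : ℕ} (A : ℝ → Matrix (Fin n) (Fin n) ℝ)
    (A' : Matrix (Fin n) (Fin n) ℝ) (t : ℝ)
    (hA : ∀ i j, HasDerivAt (fun s => A s i j) (A' i j) t)
    (hAinv : ∀ t, IsUnit (A t)) (x : Fin n → ℝ) :
    HasDerivAt (fun s => (A s)⁻¹.mulVec x)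
      (-((A t)⁻¹.mulVec (A'.mulVec ((A t)⁻¹.mulVec x)))) t := by
  have hdet : ∀ s, IsUnit (A s).det := fun s => (Matrix.isUnit_iff_isUnit_det _).1 (hAinv s)
  have hAc : ContinuousAt A t :=
    continuousAt_pi.2 fun i => continuousAt_pi.2 fun j => (hA i j).continuousAt
  have hBc : ContinuousAt (fun s => (A s)⁻¹) t := by
    simp only [Matrix.inv_def, Ring.inverse_eq_inv']
    have h1 : ContinuousAt (fun s => (A s).det) t :=
      (continuous_id.matrix_det).continuousAt.comp hAc
    have h2 : ContinuousAt (fun s => (A s).adjugate) t :=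
      (continuous_id.matrix_adjugate).continuousAt.comp hAc
    exact (h1.inv₀ (hdet t).ne_zero).smul h2
  have hw := hasDerivAt_mulVec_aux A A' t hA (fun _ => (A t)⁻¹.mulVec x) 0
    (hasDerivAt_const t _)
  rw [hasDerivAt_iff_tendsto_slope] at hw ⊢
  have hc : Continuous (fun p : Matrix (Fin n) (Fin n) ℝ × (Fin n → ℝ) => -(p.1.mulVec p.2)) :=
    (continuous_fst.matrix_mulVec continuous_snd).neg
  have hB' := hBc.tendsto.mono_left (nhdsWithin_le_nhds (s := {t}ᶜ))
  have key := (hc.tendsto _).comp (hB'.prodMk_nhds hw)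
  simp only [Matrix.mulVec_zero, add_zero] at key
  refine key.congr fun s => ?_
  have e1 : (A s)⁻¹ * A s = 1 := Matrix.nonsing_inv_mul _ (hdet s)
  have e2 : A t * (A t)⁻¹ = 1 := Matrix.mul_nonsing_inv _ (hdet t)
  simp only [Function.comp, slope_def_module, Matrix.mulVec_smul, Matrix.mulVec_sub]
  rw [Matrix.mulVec_mulVec _ (A s)⁻¹ (A s), e1, Matrix.mulVec_mulVec _ (A t) (A t)⁻¹, e2,
    Matrix.one_mulVec, Matrix.one_mulVec, ← smul_neg, neg_sub]

/-- **Lie bracket identity for gauge transforms.**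
With `ĥ(t,x) := A(t)·h(A(t)⁻¹·x)` and `f*(t,x) := A'(t)·A(t)⁻¹·x + A(t)·f(A(t)⁻¹·x)`, the
Lie bracket with respect to `x` (`t` a parameter) satisfies
`[ĥ, f*]_x(t,x) = D_x f*(t,x)·ĥ(t,x) − D_x ĥ(t,x)·f*(t,x)
  = D_t ĥ(t,x) + A(t)·[h,f](A(t)⁻¹·x)`,
where `[h,f](x) = Df(x)·h(x) − Dh(x)·f(x)`.  In particular, if `[h,f] = 0` identically then
`[ĥ, f*]_x(t,x) = D_t ĥ(t,x)`. -/
theorem gauge_transform_lie_bracket {n : ℕ}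
    (h f : (Fin n → ℝ) → (Fin n → ℝ))
    (h' f' : (Fin n → ℝ) → ((Fin n → ℝ) →L[ℝ] (Fin n → ℝ)))
    (hh : ∀ x, HasFDerivAt h (h' x) x)
    (hf : ∀ x, HasFDerivAt f (f' x) x)
    (A A' : ℝ → Matrix (Fin n) (Fin n) ℝ)
    (hA : ∀ t, ∀ i j, HasDerivAt (fun s => A s i j) (A' t i j) t)
    (hAinv : ∀ t, IsUnit (A t))
    -- `ĥ` and `f*`
    (hhat : ℝ → (Fin n → ℝ) → (Fin n → ℝ))
    (hhat_def : ∀ t x, hhat t x = (A t).mulVec (h ((A t)⁻¹.mulVec x)))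
    (fstar : ℝ → (Fin n → ℝ) → (Fin n → ℝ))
    (fstar_def : ∀ t x, fstar t x =
      (A' t).mulVec ((A t)⁻¹.mulVec x) + (A t).mulVec (f ((A t)⁻¹.mulVec x)))
    -- partial derivatives of `ĥ` and `f*`
    (Dx_hhat : ℝ → (Fin n → ℝ) → ((Fin n → ℝ) →L[ℝ] (Fin n → ℝ)))
    (hDx_hhat : ∀ t x, HasFDerivAt (fun y => hhat t y) (Dx_hhat t x) x)
    (Dt_hhat : ℝ → (Fin n → ℝ) → (Fin n → ℝ))
    (hDt_hhat : ∀ t x, HasDerivAt (fun s => hhat s x) (Dt_hhat t x) t)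
    (Dx_fstar : ℝ → (Fin n → ℝ) → ((Fin n → ℝ) →L[ℝ] (Fin n → ℝ)))
    (hDx_fstar : ∀ t x, HasFDerivAt (fun y => fstar t y) (Dx_fstar t x) x) :
    (∀ (t : ℝ) (x : Fin n → ℝ),
      Dx_fstar t x (hhat t x) - Dx_hhat t x (fstar t x) =
        Dt_hhat t x +
          (A t).mulVec
            (f' ((A t)⁻¹.mulVec x) (h ((A t)⁻¹.mulVec x)) -
              h' ((A t)⁻¹.mulVec x) (f ((A t)⁻¹.mulVec x)))) ∧
    ((∀ y, f' y (h y) - h' y (f y) = 0) →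
      ∀ (t : ℝ) (x : Fin n → ℝ),
        Dx_fstar t x (hhat t x) - Dx_hhat t x (fstar t x) = Dt_hhat t x) := by
  have main : ∀ (t : ℝ) (x : Fin n → ℝ),
      Dx_fstar t x (hhat t x) - Dx_hhat t x (fstar t x) =
        Dt_hhat t x +
          (A t).mulVec
            (f' ((A t)⁻¹.mulVec x) (h ((A t)⁻¹.mulVec x)) -
              h' ((A t)⁻¹.mulVec x) (f ((A t)⁻¹.mulVec x))) := by
    intro t x
    have e1 : (A t)⁻¹ * A t = 1 :=
      Matrix.nonsing_inv_mul _ ((Matrix.isUnit_iff_isUnit_det _).1 (hAinv t))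
    have hL : ∀ (M : Matrix (Fin n) (Fin n) ℝ) (y : Fin n → ℝ),
        HasFDerivAt (fun z : Fin n → ℝ => M.mulVec z) (M.mulVecLin.toContinuousLinearMap) y :=
      fun M y => (M.mulVecLin.toContinuousLinearMap).hasFDerivAt
    have d1 := (hL (A t) _).comp x ((hh _).comp x (hL (A t)⁻¹ x))
    have d2 := ((hL (A' t) _).comp x (hL (A t)⁻¹ x)).add
      ((hL (A t) _).comp x ((hf _).comp x (hL (A t)⁻¹ x)))
    have u1 := (hDx_hhat t x).unique (d1.congr_of_eventuallyEq
      (Filter.Eventually.of_forall fun y => hhat_def t y))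
    have u2 := (hDx_fstar t x).unique (d2.congr_of_eventuallyEq
      (Filter.Eventually.of_forall fun y => fstar_def t y))
    have d3 := hasDerivAt_mulVec_aux A (A' t) t (hA t) _ _
      ((hh _).comp_hasDerivAt t (hasDerivAt_inv_mulVec_aux A (A' t) t (hA t) hAinv x))
    have u3 := (hDt_hhat t x).unique (d3.congr_of_eventuallyEq
      (Filter.Eventually.of_forall fun s => hhat_def s x))
    have e2 : ∀ v : Fin n → ℝ, (A t)⁻¹.mulVec ((A t).mulVec v) = v := fun v => by
      rw [Matrix.mulVec_mulVec, e1, Matrix.one_mulVec]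
    rw [u1, u2, u3, hhat_def, fstar_def]
    simp only [ContinuousLinearMap.add_apply, ContinuousLinearMap.comp_apply,
      LinearMap.coe_toContinuousLinearMap', Matrix.mulVecLin_apply, Matrix.mulVec_add,
      Matrix.mulVec_sub, Matrix.mulVec_neg, e2, map_add, map_neg, Function.comp]
    abel
  refine ⟨main, fun h0 t x => ?_⟩
  rw [main, h0, Matrix.mulVec_zero, add_zero]
end
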